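/- arXiv:0912.4287 — 2 statements merged into one kernel-verified Lean document; each statement's English description precedes it below -/
import Mathlib

section
/- Let E and H be complex Hilbert spaces, let ι : E → H be a compact continuous linear operator, and let (ψ_k)_{k∈ℕ} be a Hilbert basis of H. Then for every δ > 0 there exists N ∈ ℕ such that every u ∈ E satisfying ⟪ψ_k, ι u⟫ = 0 for all k ≤ N obeys ‖ι u‖_H ≤ δ · ‖u‖_E. -/
/-!
The image of the closed unit ball of `E` lies in a compact set `K`. The closed sets
`{v | δ ≤ ‖v‖ and v ⊥ ψ k for all k ≤ N}` decrease in `N` and have empty intersection, since a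
vector orthogonal to the whole Hilbert basis vanishes. By compactness one of them already misses
`K`; this gives the bound for unit vectors `u`, and homogeneity gives it for all `u`.
-/


open scoped InnerProductSpace

/-- Abstract form of the paper's Lemma 4.1: for a compact operator `ι : E → H`
between complex Hilbert spaces and a Hilbert basis `(ψ k)` of `H`, for every
`δ > 0` there is `N` such that `‖ι u‖ ≤ δ‖u‖` whenever `ι u ⊥ ψ k` for `k ≤ N`. -/
theorem transversal_fredholm_stmt0
    {E H : Type*} [NormedAddCommGroup E] [InnerProductSpace ℂ E] [CompleteSpace E]
    [NormedAddCommGroup H] [InnerProductSpace ℂ H] [CompleteSpace H]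
    (ι : E →L[ℂ] H) (hι : IsCompactOperator ι)
    (ψ : HilbertBasis ℕ ℂ H) :
    ∀ δ : ℝ, 0 < δ → ∃ N : ℕ, ∀ u : E,
      (∀ k : ℕ, k ≤ N → ⟪ψ k, ι u⟫_ℂ = 0) → ‖ι u‖ ≤ δ * ‖u‖ := by
  intro δ hδ
  obtain ⟨K, hK, hsub⟩ :=
    IsCompactOperator.image_closedBall_subset_compact (f := (ι : E →ₗ[ℂ] H)) hι 1
  let t : ℕ → Set H := fun N => {v | δ ≤ ‖v‖ ∧ ∀ k : ℕ, k ≤ N → ⟪ψ k, v⟫_ℂ = 0}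
  have ht_closed : ∀ N, IsClosed (t N) := by
    intro N
    have hset : t N = {v | δ ≤ ‖v‖} ∩ ⋂ k, ⋂ (_ : k ≤ N), {v | ⟪ψ k, v⟫_ℂ = 0} := by
      ext v
      simp [t]
    rw [hset]
    refine (isClosed_le continuous_const continuous_norm).inter ?_
    exact isClosed_iInter fun k => isClosed_iInter fun _ =>
      isClosed_eq (continuous_const.inner continuous_id) continuous_const
  have ht_anti : Antitone t := fun M N hMN v hv =>
    ⟨hv.1, fun k hk => hv.2 k (hk.trans hMN)⟩
  have ht_empty : K ∩ ⋂ N, t N = ∅ := by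
    rw [Set.eq_empty_iff_forall_notMem]
    rintro v ⟨-, hv⟩
    rw [Set.mem_iInter] at hv
    have hv0 : v = 0 := by
      apply ψ.repr.injective
      ext k
      rw [ψ.repr_apply_apply, (hv k).2 k le_rfl]
      simp
    have hnorm := (hv 0).1
    rw [hv0, norm_zero] at hnorm
    exact hδ.not_ge hnorm
  obtain ⟨N, hN⟩ := hK.elim_directed_family_closed t ht_closed ht_empty ht_anti.directed_ge
  refine ⟨N, fun u hu => ?_⟩
  rcases eq_or_ne u 0 with rfl | hu0
  · simp
  have hpos : 0 < ‖u‖ := norm_pos_iff.mpr hu0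
  by_contra! hlt
  -- The normalization of `u` would have its image in `K ∩ t N`.
  set c : ℂ := ((‖u‖⁻¹ : ℝ) : ℂ) with hc
  have hcn : ‖c‖ = ‖u‖⁻¹ := by
    rw [hc, Complex.norm_real, norm_inv, norm_norm]
  have hmem : ι (c • u) ∈ K := by
    refine hsub ⟨c • u, ?_, rfl⟩
    rw [mem_closedBall_zero_iff, norm_smul, hcn, inv_mul_cancel₀ hpos.ne']
  have hmem_t : ι (c • u) ∈ t N := by
    refine ⟨?_, fun k hk => ?_⟩
    · rw [map_smul, norm_smul, hcn, inv_mul_eq_div, le_div_iff₀ hpos]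
      exact hlt.le
    · rw [map_smul, inner_smul_right, hu k hk, mul_zero]
  exact Set.eq_empty_iff_forall_notMem.mp hN _ ⟨hmem, hmem_t⟩
end

section
/- Let (T, μ) be a measure space, let E and H be complex Hilbert spaces, let ι : E → H be a compact continuous linear operator, and let (ψ_k)_{k∈ℕ} be a Hilbert basis of H. Then for every C > 0 there exists N ∈ ℕ with the following property: if v : T → E is strongly measurable with ∫_T ‖v(t)‖_E² dμ(t) < ∞, with ∫_T ‖v(t)‖_E² dμ(t) ≤ C² · ∫_T ‖ι(v(t))‖_H² dμ(t), and if for μ-almost every t ∈ T one has ⟪ψ_k, ι(v(t))⟫ = 0 for all k ≤ N, then v(t) = 0 for μ-almost every t. -/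
/-!
On the vectors `x` with `ι x ⟂ ψ 0, …, ψ N`, the operator `ι` has arbitrarily small norm once `N` is
large (`exists_norm_le_of_orthogonal`): the image of the unit ball lies in a compact set, which is
covered by one of the increasing open `ε`-thickenings of `span (ψ 0, …, ψ N)`, and a vector
orthogonal to a subspace has norm equal to its distance to that subspace. Taking `ε = 1 / (2C)` and
applying this to almost every value of `v`, one gets `∫ ‖v‖² ≤ C² ∫ ‖ι v‖² ≤ ¼ ∫ ‖v‖²`, hence
`∫ ‖v‖² = 0`.
-/

open MeasureTheory
open scoped InnerProductSpace

/-- A compact set lies within `ε` of the span of finitely many vectors of a Hilbert basis. -/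
lemma exists_subset_thickening_span {H : Type*} [NormedAddCommGroup H] [InnerProductSpace ℂ H]
    (ψ : HilbertBasis ℕ ℂ H) {K : Set H} (hK : IsCompact K) {ε : ℝ} (hε : 0 < ε) :
    ∃ N : ℕ, K ⊆ Metric.thickening ε (Submodule.span ℂ (ψ '' Set.Iic N) : Set H) := by
  refine hK.elim_directed_cover _ (fun N => Metric.isOpen_thickening) ?_ ?_
  · intro h _
    obtain ⟨n, hn⟩ := ((Metric.tendsto_nhds.1 (ψ.hasSum_repr h).tendsto_sum_nat) ε hε).exists
    refine Set.mem_iUnion.2 ⟨n, Metric.mem_thickening_iff.2 ⟨_, ?_, by rwa [dist_comm]⟩⟩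
    refine Submodule.sum_mem _ fun i hi => Submodule.smul_mem _ _ (Submodule.subset_span ?_)
    exact ⟨i, (Finset.mem_range.1 hi).le, rfl⟩
  · refine Monotone.directed_le fun a b hab => ?_
    exact Metric.thickening_subset_of_subset _
      (Submodule.span_mono (Set.image_mono (Set.Iic_subset_Iic.2 hab)))

/-- A compact operator is small on the vectors whose image is orthogonal to sufficiently many
elements of a Hilbert basis. -/
lemma exists_norm_le_of_orthogonal
    {E H : Type*} [NormedAddCommGroup E] [InnerProductSpace ℂ E]
    [NormedAddCommGroup H] [InnerProductSpace ℂ H]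
    (ι : E →L[ℂ] H) (hι : IsCompactOperator ι) (ψ : HilbertBasis ℕ ℂ H) {ε : ℝ} (hε : 0 < ε) :
    ∃ N : ℕ, ∀ x : E, (∀ k : ℕ, k ≤ N → ⟪ψ k, ι x⟫_ℂ = 0) → ‖ι x‖ ≤ ε * ‖x‖ := by
  obtain ⟨K, hK, hsub⟩ := IsCompactOperator.image_closedBall_subset_compact
    (f := (ι : E →ₗ[ℂ] H)) hι 1
  obtain ⟨N, hN⟩ := exists_subset_thickening_span ψ hK hε
  refine ⟨N, fun x hx => ?_⟩
  rcases eq_or_ne x 0 with rfl | hx0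
  · simp
  have hxpos : 0 < ‖x‖ := norm_pos_iff.2 hx0
  set u : E := ((‖x‖⁻¹ : ℝ) : ℂ) • x with hu
  have hu1 : ‖u‖ = 1 := by
    rw [hu, norm_smul, Complex.norm_real, norm_inv, norm_norm, inv_mul_cancel₀ hxpos.ne']
  obtain ⟨y, hy, hdist⟩ := Metric.mem_thickening_iff.1
    (hN (hsub ⟨u, by simp [hu1], rfl⟩))
  have hdist' : ‖ι u - y‖ < ε := by rwa [dist_eq_norm] at hdist
  have horth : ⟪y, ι u⟫_ℂ = 0 := by
    have hspan : Submodule.span ℂ (ψ '' Set.Iic N) ≤ (ℂ ∙ ι u)ᗮ := by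
      refine Submodule.span_le.2 ?_
      rintro _ ⟨k, hk, rfl⟩
      rw [SetLike.mem_coe, Submodule.mem_orthogonal_singleton_iff_inner_left, hu, map_smul,
        inner_smul_right, hx k hk, mul_zero]
    exact Submodule.mem_orthogonal_singleton_iff_inner_left.1 (hspan hy)
  -- By Pythagoras, `‖ι u - y‖² = ‖ι u‖² + ‖y‖²`.
  have hle : ‖ι u‖ ≤ ‖ι u - y‖ := by
    have h := norm_sub_sq (𝕜 := ℂ) (ι u) y
    rw [inner_eq_zero_symm.1 horth] at h
    simp only [map_zero, mul_zero, sub_zero] at h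
    exact (sq_le_sq₀ (norm_nonneg _) (norm_nonneg _)).1 (by nlinarith [sq_nonneg ‖y‖])
  have hscale : ‖ι u‖ = ‖x‖⁻¹ * ‖ι x‖ := by
    rw [hu, map_smul, norm_smul, Complex.norm_real, norm_inv, norm_norm]
  have hlt := hle.trans hdist'.le
  rw [hscale, inv_mul_le_iff₀ hxpos] at hlt
  linarith

/-- Abstract measure-theoretic form of the paper's Theorem 4.3: given a compact
operator `ι : E → H` between complex Hilbert spaces and a Hilbert basis `(ψ k)`
of `H`, for every `C > 0` there is `N` such that any square-integrable family
`v : T → E` satisfying `∫‖v‖² ≤ C²∫‖ι v‖²` whose values are a.e. orthogonal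
under `ι` to `ψ 0, …, ψ N` vanishes a.e. -/
theorem transversal_fredholm_stmt2
    {T : Type*} [MeasurableSpace T] (μ : Measure T)
    {E H : Type*} [NormedAddCommGroup E] [InnerProductSpace ℂ E] [CompleteSpace E]
    [NormedAddCommGroup H] [InnerProductSpace ℂ H] [CompleteSpace H]
    (ι : E →L[ℂ] H) (hι : IsCompactOperator ι)
    (ψ : HilbertBasis ℕ ℂ H) :
    ∀ C : ℝ, 0 < C → ∃ N : ℕ, ∀ v : T → E,
      StronglyMeasurable v →
      Integrable (fun t => ‖v t‖ ^ 2) μ →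
      (∫ t, ‖v t‖ ^ 2 ∂μ) ≤ C ^ 2 * ∫ t, ‖ι (v t)‖ ^ 2 ∂μ →
      (∀ᵐ t ∂μ, ∀ k : ℕ, k ≤ N → ⟪ψ k, ι (v t)⟫_ℂ = 0) →
      ∀ᵐ t ∂μ, v t = 0 := by
  intro C hC
  obtain ⟨N, hN⟩ := exists_norm_le_of_orthogonal ι hι ψ (ε := 1 / (2 * C)) (by positivity)
  refine ⟨N, fun v _ hint hle hort => ?_⟩
  have hpt : ∀ᵐ t ∂μ, ‖ι (v t)‖ ^ 2 ≤ (1 / (2 * C)) ^ 2 * ‖v t‖ ^ 2 := by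
    filter_upwards [hort] with t ht
    rw [← mul_pow]
    exact pow_le_pow_left₀ (norm_nonneg _) (hN _ ht) 2
  have hsmall : ∫ t, ‖ι (v t)‖ ^ 2 ∂μ ≤ (1 / (2 * C)) ^ 2 * ∫ t, ‖v t‖ ^ 2 ∂μ := by
    rw [← integral_const_mul]
    exact integral_mono_of_nonneg (.of_forall fun t => sq_nonneg _) (hint.const_mul _) hpt
  have hnonneg : 0 ≤ ∫ t, ‖v t‖ ^ 2 ∂μ := integral_nonneg fun t => sq_nonneg _
  have hquarter : ∫ t, ‖v t‖ ^ 2 ∂μ ≤ 1 / 4 * ∫ t, ‖v t‖ ^ 2 ∂μ := by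
    calc ∫ t, ‖v t‖ ^ 2 ∂μ
        ≤ C ^ 2 * ((1 / (2 * C)) ^ 2 * ∫ t, ‖v t‖ ^ 2 ∂μ) :=
          hle.trans (mul_le_mul_of_nonneg_left hsmall (sq_nonneg C))
      _ = 1 / 4 * ∫ t, ‖v t‖ ^ 2 ∂μ := by
          field_simp
          ring
  have hzero : ∫ t, ‖v t‖ ^ 2 ∂μ = 0 := by linarith
  filter_upwards [(integral_eq_zero_iff_of_nonneg (fun t => sq_nonneg ‖v t‖) hint).1 hzero] with t ht
  simpa using ht
end
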